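/- Let n ≥ 3 and R > 0. There is a constant C (depending only on n and R) such that every solution w as in the context satisfies, for every t ∈ ℝ, ‖Z₀w(t,·)‖²_{L²(ℝⁿ)} + ∑_{0≤j<k≤n} ‖Z_{jk}w(t,·)‖²_{L²(ℝⁿ)} ≤ C ∫_{ℝⁿ} ( |∇f(x)|² + g(x)² ) dx. -/

import Mathlib

/-!
The proof is the conformal (Morawetz) energy argument. Write `X = x·∇w`, `m(t) = ‖w(t)‖²` and
`E(t) = ∫ (t² + |x|²)((∂_t w)² + |∇w|²) + 4t X ∂_t w + 2(n-1) t w ∂_t w - (n-1) w²`.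

* `E` is conserved: the time derivative of its density is a spatial divergence
  (`conf_local_conservation`), and everything is compactly supported in space.
* By Lagrange's identity the squares of all invariant fields add up to
  `(t² + |x|²)((∂_t w)² + |∇w|²) + 4t X ∂_t w` (`fieldDensity_eq`). Since
  `∫ (2 w X + n w²) = 0` (`integral_radial`), it follows that
  `E = ‖Z₀w + (n-1)w‖² + ∑ ‖Z_{jk}w‖²`. Hence the claim reduces to bounding `m` by `E`.
* With `S = Z₀w + (n-1)w` one finds `t m' = 2∫ w S - (n-2) m ≤ -m/2 + 2E`, using `n ≥ 3`; thus
  `√t (m - 4E)` is nonincreasing for `t > 0` and vanishes at `0`, giving `m ≤ 4E`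
  (`gronwall_pos`, `integral_sq_le`). Negative times follow by reflection.
* At `t = 0` the energy is at most `∫ |x|² (g² + |∇f|²) ≤ R² ∫ (g² + |∇f|²)`.
-/

noncomputable section
open MeasureTheory Real
open scoped RealInnerProductSpace BigOperators ENNReal

abbrev Euc (n : ℕ) := EuclideanSpace ℝ (Fin n)

/-- Time derivative `∂_t w`. -/
def pt {n : ℕ} (w : ℝ → Euc n → ℝ) (t : ℝ) (x : Euc n) : ℝ :=
  deriv (fun s => w s x) t

/-- Spatial partial derivative `∂_{x_j} f`. -/
def pj {n : ℕ} (f : Euc n → ℝ) (x : Euc n) (j : Fin n) : ℝ :=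
  fderiv ℝ f x (EuclideanSpace.single j 1)

/-- Spatial Laplacian `Δ_x f = ∑_j ∂²_{x_j} f`. -/
def lap {n : ℕ} (f : Euc n → ℝ) (x : Euc n) : ℝ :=
  ∑ j, pj (fun y => pj f y j) x j

/-- `w` is a smooth solution of the free wave equation on `ℝ × ℝⁿ` with Cauchy data
`f, g` smooth and supported in `{|x| ≤ R}`, enjoying finite propagation speed. -/
structure IsWaveSol (n : ℕ) (R : ℝ) (f g : Euc n → ℝ) (w : ℝ → Euc n → ℝ) : Prop where
  smooth_f : ContDiff ℝ (⊤ : ℕ∞) f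
  smooth_g : ContDiff ℝ (⊤ : ℕ∞) g
  supp_f : tsupport f ⊆ Metric.closedBall 0 R
  supp_g : tsupport g ⊆ Metric.closedBall 0 R
  smooth_w : ContDiff ℝ (⊤ : ℕ∞) (fun p : ℝ × Euc n => w p.1 p.2)
  wave_eq : ∀ t x, pt (pt w) t x = lap (w t) x
  init_pos : ∀ x, w 0 x = f x
  init_vel : ∀ x, pt w 0 x = g x
  fin_prop : ∀ t, tsupport (w t) ⊆ Metric.closedBall 0 (R + |t|)

/-- The `L²(ℝⁿ)` norm. -/
def L2norm {n : ℕ} (h : Euc n → ℝ) : ℝ :=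
  (∫ x, (h x) ^ 2) ^ (1/2 : ℝ)

/-- The scaling vector field `Z₀ w = t ∂_t w + ∑_j x_j ∂_{x_j} w`. -/
def Z0 {n : ℕ} (w : ℝ → Euc n → ℝ) (t : ℝ) (x : Euc n) : ℝ :=
  t * pt w t x + ∑ j, x j * pj (w t) x j

/-- The boost `Z_{0k} w = t ∂_{x_k} w + x_k ∂_t w`. -/
def Z0k {n : ℕ} (w : ℝ → Euc n → ℝ) (t : ℝ) (k : Fin n) (x : Euc n) : ℝ :=
  t * pj (w t) x k + x k * pt w t x

/-- The rotation `Z_{jk} w = x_k ∂_{x_j} w − x_j ∂_{x_k} w`. -/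
def Zjk {n : ℕ} (w : ℝ → Euc n → ℝ) (t : ℝ) (j k : Fin n) (x : Euc n) : ℝ :=
  x k * pj (w t) x j - x j * pj (w t) x k

/-! ### Calculus on spacetime -/

/-- Directional derivative of a function on spacetime `ℝ × ℝⁿ` in the direction `v`. -/
def Dv {n : ℕ} (v : ℝ × Euc n) (F : ℝ × Euc n → ℝ) (p : ℝ × Euc n) : ℝ :=
  fderiv ℝ F p v

/-- The unit vector in the time direction. -/
def eT (n : ℕ) : ℝ × Euc n := (1, 0)

/-- The unit vector in the `j`-th space direction. -/
def eX {n : ℕ} (j : Fin n) : ℝ × Euc n := (0, EuclideanSpace.single j 1)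

section Leibniz

variable {n : ℕ} {v : ℝ × Euc n} {F G : ℝ × Euc n → ℝ} {p : ℝ × Euc n}

lemma Dv_const (c : ℝ) : Dv v (fun _ => c) p = 0 := by
  simp [Dv]

lemma Dv_add (hF : DifferentiableAt ℝ F p) (hG : DifferentiableAt ℝ G p) :
    Dv v (fun q => F q + G q) p = Dv v F p + Dv v G p := by
  simp [Dv, fderiv_fun_add hF hG]

lemma Dv_sub (hF : DifferentiableAt ℝ F p) (hG : DifferentiableAt ℝ G p) :
    Dv v (fun q => F q - G q) p = Dv v F p - Dv v G p := by
  simp [Dv, fderiv_fun_sub hF hG]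

lemma Dv_mul (hF : DifferentiableAt ℝ F p) (hG : DifferentiableAt ℝ G p) :
    Dv v (fun q => F q * G q) p = Dv v F p * G p + F p * Dv v G p := by
  simp [Dv, fderiv_fun_mul hF hG]; ring

lemma Dv_sq (hF : DifferentiableAt ℝ F p) :
    Dv v (fun q => F q ^ 2) p = 2 * F p * Dv v F p := by
  have : (fun q => F q ^ 2) = fun q => F q * F q := by funext q; ring
  rw [this, Dv_mul hF hF]; ring

lemma Dv_sum {H : Fin n → ℝ × Euc n → ℝ} (hH : ∀ j, DifferentiableAt ℝ (H j) p) :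
    Dv v (fun q => ∑ j, H j q) p = ∑ j, Dv v (H j) p := by
  unfold Dv
  rw [fderiv_fun_sum (fun j _ => hH j)]
  simp

lemma Dv_fst : Dv v (fun q => q.1) p = v.1 := by
  simp [Dv, fderiv_fst]

lemma Dv_coord (k : Fin n) : Dv v (fun q => q.2 k) p = v.2 k := by
  have h : HasFDerivAt (fun q : ℝ × Euc n => q.2 k)
      ((EuclideanSpace.proj k : Euc n →L[ℝ] ℝ).comp (ContinuousLinearMap.snd ℝ ℝ (Euc n))) p :=
    ((EuclideanSpace.proj k : Euc n →L[ℝ] ℝ).comp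
      (ContinuousLinearMap.snd ℝ ℝ (Euc n))).hasFDerivAt
  simp [Dv, h.fderiv]

lemma Dv_smooth (hF : ContDiff ℝ (⊤ : ℕ∞) F) : ContDiff ℝ (⊤ : ℕ∞) (Dv v F) := by
  unfold Dv
  exact (hF.fderiv_right (m := (⊤ : ℕ∞)) (by simp)).clm_apply contDiff_const

lemma Dv_comm (hF : ContDiff ℝ (⊤ : ℕ∞) F) (u : ℝ × Euc n) :
    Dv v (Dv u F) p = Dv u (Dv v F) p := by
  have hd : DifferentiableAt ℝ (fderiv ℝ F) p :=
    (hF.fderiv_right (m := (⊤ : ℕ∞)) (by simp)).differentiable (by simp) p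
  have key : ∀ a b : ℝ × Euc n, Dv a (Dv b F) p = fderiv ℝ (fderiv ℝ F) p a b := by
    intro a b
    unfold Dv
    rw [fderiv_clm_apply hd (differentiableAt_const b)]
    simp
  rw [key, key]
  refine (hF.contDiffAt.isSymmSndFDerivAt ?_).eq v u
  rw [minSmoothness_of_isRCLikeNormedField]
  exact WithTop.coe_le_coe.2 le_top

end Leibniz

section Slices

variable {n : ℕ} {F : ℝ × Euc n → ℝ}

lemma hasDerivAt_time (hF : Differentiable ℝ F) (t : ℝ) (x : Euc n) :
    HasDerivAt (fun s => F (s, x)) (Dv (eT n) F (t, x)) t := by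
  have h1 : HasDerivAt (fun s : ℝ => (s, x)) (eT n) t :=
    (hasDerivAt_id t).prodMk (hasDerivAt_const t x)
  exact (hF (t, x)).hasFDerivAt.comp_hasDerivAt t h1

lemma hasFDerivAt_space (hF : Differentiable ℝ F) (t : ℝ) (x : Euc n) :
    HasFDerivAt (fun y => F (t, y))
      ((fderiv ℝ F (t, x)).comp (ContinuousLinearMap.inr ℝ ℝ (Euc n))) x :=
  (hF (t, x)).hasFDerivAt.comp x (hasFDerivAt_prodMk_right t x)

lemma pt_eq (hF : Differentiable ℝ F) :
    pt (fun t x => F (t, x)) = fun t x => Dv (eT n) F (t, x) := by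
  funext t x
  exact (hasDerivAt_time hF t x).deriv

lemma pj_eq (hF : Differentiable ℝ F) (t : ℝ) (x : Euc n) (j : Fin n) :
    pj (fun y => F (t, y)) x j = Dv (eX j) F (t, x) := by
  unfold pj
  rw [(hasFDerivAt_space hF t x).fderiv]
  simp [Dv, eX]

end Slices

/-! ### Integrals over time slices -/

/-- Smooth spacetime functions supported in the domain of influence `{|x| ≤ R + |t|}` of the
ball of radius `R`. -/
structure ConeSupp {n : ℕ} (R : ℝ) (F : ℝ × Euc n → ℝ) : Prop where
  smooth : ContDiff ℝ (⊤ : ℕ∞) F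
  zero : ∀ t x, R + |t| < ‖x‖ → F (t, x) = 0

namespace ConeSupp

variable {n : ℕ} {R : ℝ} {F G : ℝ × Euc n → ℝ}

lemma differentiable (hF : ConeSupp R F) : Differentiable ℝ F :=
  hF.smooth.differentiable (by simp)

lemma add (hF : ConeSupp R F) (hG : ConeSupp R G) : ConeSupp R (fun p => F p + G p) :=
  ⟨hF.smooth.add hG.smooth, fun t x h => by simp [hF.zero t x h, hG.zero t x h]⟩

lemma sub (hF : ConeSupp R F) (hG : ConeSupp R G) : ConeSupp R (fun p => F p - G p) :=
  ⟨hF.smooth.sub hG.smooth, fun t x h => by simp [hF.zero t x h, hG.zero t x h]⟩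

lemma mul_left (hF : ConeSupp R F) (hG : ContDiff ℝ (⊤ : ℕ∞) G) :
    ConeSupp R (fun p => G p * F p) :=
  ⟨hG.mul hF.smooth, fun t x h => by simp [hF.zero t x h]⟩

lemma mul_right (hF : ConeSupp R F) (hG : ContDiff ℝ (⊤ : ℕ∞) G) :
    ConeSupp R (fun p => F p * G p) :=
  ⟨hF.smooth.mul hG, fun t x h => by simp [hF.zero t x h]⟩

lemma sq (hF : ConeSupp R F) : ConeSupp R (fun p => F p ^ 2) :=
  ⟨hF.smooth.pow 2, fun t x h => by simp [hF.zero t x h]⟩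

lemma sum {H : Fin n → ℝ × Euc n → ℝ} (hH : ∀ j, ConeSupp R (H j)) :
    ConeSupp R (fun p => ∑ j, H j p) :=
  ⟨ContDiff.sum fun j _ => (hH j).smooth,
    fun t x h => Finset.sum_eq_zero fun j _ => (hH j).zero t x h⟩

lemma Dv (hF : ConeSupp R F) (v : ℝ × Euc n) : ConeSupp R (Dv v F) := by
  refine ⟨Dv_smooth hF.smooth, fun t x h => ?_⟩
  have hopen : IsOpen {p : ℝ × Euc n | R + |p.1| < ‖p.2‖} :=
    isOpen_lt (by fun_prop) (by fun_prop)
  have hev : F =ᶠ[nhds (t, x)] fun _ => 0 := by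
    filter_upwards [hopen.mem_nhds h] with p hp using hF.zero p.1 p.2 hp
  simp [_root_.Dv, hev.fderiv_eq]

lemma hasCompactSupport (hF : ConeSupp R F) (t : ℝ) :
    HasCompactSupport (fun x => F (t, x)) := by
  refine HasCompactSupport.intro (isCompact_closedBall (0 : Euc n) (R + |t|)) fun x hx => ?_
  exact hF.zero t x (by simpa using hx)

lemma integrable (hF : ConeSupp R F) (t : ℝ) : Integrable (fun x => F (t, x)) :=
  (hF.smooth.continuous.comp (by fun_prop : Continuous fun x : Euc n => (t, x)))
    |>.integrable_of_hasCompactSupport (hF.hasCompactSupport t)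

/-- Divergence theorem: a spatial derivative of a compactly supported function has integral zero. -/
lemma integral_space (hF : ConeSupp R F) (t : ℝ) (j : Fin n) :
    ∫ x, _root_.Dv (eX j) F (t, x) = 0 := by
  have hd : ∀ x, fderiv ℝ (fun y => F (t, y)) x (EuclideanSpace.single j 1)
      = _root_.Dv (eX j) F (t, x) := fun x => pj_eq hF.differentiable t x j
  have h := integral_mul_fderiv_eq_neg_fderiv_mul_of_integrable (μ := volume)
    (f := fun _ : Euc n => (1 : ℝ)) (g := fun x => F (t, x)) (v := EuclideanSpace.single j 1)
    (by simp) (by simpa [hd] using (hF.Dv (eX j)).integrable t) (by simpa using hF.integrable t)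
    (by simp) (fun x _ => (hasFDerivAt_space hF.differentiable t x).differentiableAt)
  simpa [hd] using h

lemma integral_div {H : Fin n → ℝ × Euc n → ℝ} (hH : ∀ j, ConeSupp R (H j)) (t : ℝ) :
    ∫ x, ∑ j, _root_.Dv (eX j) (H j) (t, x) = 0 := by
  rw [integral_finsetSum _ fun j _ => ((hH j).Dv (eX j)).integrable t]
  exact Finset.sum_eq_zero fun j _ => (hH j).integral_space t j

lemma hasDerivAt_integral (hF : ConeSupp R F) (t : ℝ) :
    HasDerivAt (fun s => ∫ x, F (s, x)) (∫ x, _root_.Dv (eT n) F (t, x)) t := by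
  have hD := hF.Dv (eT n)
  have hcomp : IsCompact (Set.Icc (t - 1) (t + 1) ×ˢ
      Metric.closedBall (0 : Euc n) (R + |t| + 1)) :=
    isCompact_Icc.prod (isCompact_closedBall _ _)
  obtain ⟨M, hM⟩ := hcomp.exists_bound_of_continuousOn hD.smooth.continuous.continuousOn
  refine (hasDerivAt_integral_of_dominated_loc_of_deriv_le
    (s := Set.Icc (t - 1) (t + 1))
    (F' := fun s x => _root_.Dv (eT n) F (s, x))
    (bound := (Metric.closedBall (0 : Euc n) (R + |t| + 1)).indicator fun _ => M)
    (Icc_mem_nhds (by linarith) (by linarith))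
    (Filter.Eventually.of_forall fun s => (hF.integrable s).aestronglyMeasurable)
    (hF.integrable t) (hD.integrable t).aestronglyMeasurable
    (Filter.Eventually.of_forall fun x s hs => ?_)
    ?_ (Filter.Eventually.of_forall fun x s _ => hasDerivAt_time hF.differentiable s x)).2
  · by_cases hx : x ∈ Metric.closedBall (0 : Euc n) (R + |t| + 1)
    · rw [Set.indicator_of_mem hx]
      exact hM (s, x) ⟨hs, hx⟩
    · rw [Set.indicator_of_notMem hx]
      have hst : |s| ≤ |t| + 1 := by
        have h1 : |s - t| ≤ 1 := abs_le.2 ⟨by linarith [hs.1], by linarith [hs.2]⟩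
        have h2 := abs_add_le (s - t) t
        rw [sub_add_cancel] at h2
        linarith
      have hx' : R + |t| + 1 < ‖x‖ := by simpa using hx
      rw [hD.zero s x (by linarith)]
      simp
  · exact (integrable_indicator_iff measurableSet_closedBall).2
      (integrableOn_const (isCompact_closedBall _ _).measure_lt_top.ne)

end ConeSupp

/-! ### The conformal energy and its flux -/

/-- The density of (twice) the conformal energy, where `a`, `b`, `c j` play the roles of `w`,
`∂_t w`, `∂_{x_j} w`:
`(t² + |x|²)(b² + |c|²) + 4t (x·c) b + 2(n-1) t a b - (n-1) a²`. -/
def confDensity {n : ℕ} (a b : ℝ × Euc n → ℝ) (c : Fin n → ℝ × Euc n → ℝ)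
    (p : ℝ × Euc n) : ℝ :=
  (p.1 ^ 2 + ∑ k, p.2 k ^ 2) * (b p ^ 2 + ∑ k, c k p ^ 2)
    + 4 * p.1 * (∑ k, p.2 k * c k p) * b p
    + 2 * ((n : ℝ) - 1) * p.1 * (a p * b p) - ((n : ℝ) - 1) * a p ^ 2

/-- The `j`-th component of the flux of the conformal energy. -/
def confFlux {n : ℕ} (a b : ℝ × Euc n → ℝ) (c : Fin n → ℝ × Euc n → ℝ) (j : Fin n)
    (p : ℝ × Euc n) : ℝ :=
  2 * (p.1 ^ 2 + ∑ k, p.2 k ^ 2) * (b p * c j p) + 2 * p.1 * p.2 j * b p ^ 2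
    + 4 * p.1 * (∑ k, p.2 k * c k p) * c j p - 2 * p.1 * p.2 j * (∑ k, c k p ^ 2)
    + 2 * ((n : ℝ) - 1) * p.1 * (a p * c j p)

/-- The local conservation law `∂_t q = div F` for the conformal energy; `hbt` is the wave
equation, and `d j`, `h j k` stand for `∂_t ∂_j w`, `∂_j ∂_k w`. -/
lemma conf_local_conservation {n : ℕ} {a b : ℝ × Euc n → ℝ} {c d : Fin n → ℝ × Euc n → ℝ}
    {h : Fin n → Fin n → ℝ × Euc n → ℝ} (ha : Differentiable ℝ a) (hb : Differentiable ℝ b)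
    (hc : ∀ j, Differentiable ℝ (c j)) (p : ℝ × Euc n)
    (hat : Dv (eT n) a p = b p) (hax : ∀ j, Dv (eX j) a p = c j p)
    (hbt : Dv (eT n) b p = ∑ j, h j j p) (hbx : ∀ j, Dv (eX j) b p = d j p)
    (hct : ∀ j, Dv (eT n) (c j) p = d j p) (hcx : ∀ j k, Dv (eX j) (c k) p = h j k p)
    (hs : ∀ j k, h j k p = h k j p) :
    Dv (eT n) (confDensity a b c) p = ∑ j, Dv (eX j) (confFlux a b c j) p := by
  have hT : Dv (eT n) (confDensity a b c) p =
      2 * p.1 * (b p ^ 2 + ∑ k, c k p ^ 2)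
      + (p.1 ^ 2 + ∑ k, p.2 k ^ 2) * (2 * b p * (∑ j, h j j p) + 2 * ∑ k, c k p * d k p)
      + 4 * (∑ k, p.2 k * c k p) * b p + 4 * p.1 * (∑ k, p.2 k * d k p) * b p
      + 4 * p.1 * (∑ k, p.2 k * c k p) * (∑ j, h j j p)
      + 2 * ((n : ℝ) - 1) * (a p * b p) + 2 * ((n : ℝ) - 1) * p.1 * (b p * b p
      + a p * ∑ j, h j j p) - 2 * ((n : ℝ) - 1) * (a p * b p) := by
    unfold confDensity
    simp (disch := first | fun_prop | (intro _; fun_prop)) only [Dv_add, Dv_sub, Dv_mul, Dv_sq,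
      Dv_sum, Dv_const, Dv_fst, Dv_coord, hat, hbt, hct]
    simp only [eT, PiLp.zero_apply, mul_zero, zero_mul, zero_add, add_zero,
      Finset.sum_const_zero, Finset.mul_sum, mul_assoc]
    ring_nf
  have hX : ∀ j, Dv (eX j) (confFlux a b c j) p =
      4 * b p * (p.2 j * c j p)
      + 2 * (p.1 ^ 2 + ∑ k, p.2 k ^ 2) * (c j p * d j p + b p * h j j p)
      + 2 * p.1 * b p ^ 2 + 4 * p.1 * b p * (p.2 j * d j p)
      + 4 * p.1 * (c j p ^ 2 + (∑ k, c j p * (p.2 k * h j k p))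
        + (∑ k, p.2 k * c k p) * h j j p)
      - 2 * p.1 * (∑ k, c k p ^ 2) - 4 * p.1 * (∑ k, p.2 j * (c k p * h j k p))
      + 2 * ((n : ℝ) - 1) * p.1 * (c j p ^ 2 + a p * h j j p) := by
    intro j
    unfold confFlux
    simp (disch := first | fun_prop | (intro _; fun_prop)) only [Dv_add, Dv_sub, Dv_mul, Dv_sq,
      Dv_sum, Dv_const, Dv_fst, Dv_coord, hax, hbx, hcx]
    have e1 : ∑ k, 2 * p.2 k * (eX j).2 k = 2 * p.2 j := by
      simp [eX, PiLp.single_apply]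
    have e2 : ∑ k, ((eX j).2 k * c k p + p.2 k * h j k p) = c j p + ∑ k, p.2 k * h j k p := by
      simp [eX, PiLp.single_apply, Finset.sum_add_distrib]
    have e3 : (eX j).2 j = (1 : ℝ) := by simp [eX]
    have e4 : (eX j).1 = (0 : ℝ) := by simp [eX]
    have e5 : ∑ k, 2 * c k p * h j k p = 2 * ∑ k, c k p * h j k p := by
      simp only [Finset.mul_sum, mul_assoc]
    rw [e1, e2, e3, e4, e5]
    simp only [← Finset.mul_sum]
    ring
  rw [hT, Finset.sum_congr rfl fun j _ => hX j]
  -- The Hessian terms cancel by symmetry.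
  have hswap : ∑ j, ∑ k, c j p * (p.2 k * h j k p) = ∑ j, ∑ k, p.2 j * (c k p * h j k p) := by
    rw [Finset.sum_comm]
    refine Finset.sum_congr rfl fun j _ => Finset.sum_congr rfl fun k _ => ?_
    rw [hs k j]; ring
  simp only [Finset.sum_add_distrib, Finset.sum_sub_distrib, ← Finset.mul_sum,
    Finset.sum_const, Finset.card_univ, Fintype.card_fin, nsmul_eq_mul] at hswap ⊢
  linear_combination (-4 * p.1) * hswap

/-- `∫ (2 w (x·∇w) + n w²) = 0`, since the integrand is the divergence of `w² x`. -/
lemma integral_radial {n : ℕ} {R : ℝ} {a : ℝ × Euc n → ℝ} (ha : ConeSupp R a) (t : ℝ) :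
    ∫ x, (2 * a (t, x) * (∑ k, x k * Dv (eX k) a (t, x)) + n * a (t, x) ^ 2) = 0 := by
  have hdiff := ha.differentiable
  rw [← ConeSupp.integral_div (R := R) (H := fun j p => p.2 j * a p ^ 2)
    (fun j => ha.sq.mul_left (by fun_prop)) t]
  congr 1
  funext x
  have : ∀ j, Dv (eX j) (fun p => p.2 j * a p ^ 2) (t, x)
      = a (t, x) ^ 2 + 2 * a (t, x) * (x j * Dv (eX j) a (t, x)) := by
    intro j
    simp (disch := fun_prop) only [Dv_mul, Dv_sq, Dv_coord]
    simp [eX]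
    ring
  simp only [this, Finset.sum_add_distrib, ← Finset.mul_sum, Finset.sum_const,
    Finset.card_univ, Fintype.card_fin, nsmul_eq_mul]
  ring

/-! ### Algebra of the invariant fields -/

lemma sum_lt_eq_half {n : ℕ} (T : Fin n → Fin n → ℝ) (h0 : ∀ j, T j j = 0)
    (hs : ∀ j k, T j k = T k j) :
    ∑ j, ∑ k, T j k = 2 * ∑ j, ∑ k, (if j < k then T j k else 0) := by
  have h : ∀ j k, T j k = (if j < k then T j k else 0) + (if k < j then T k j else 0) := by
    intro j k
    rcases lt_trichotomy j k with h | h | h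
    · simp [h, h.not_gt]
    · subst h; simp [h0]
    · simp [h, h.not_gt, hs j k]
  rw [Finset.sum_congr rfl fun j _ => Finset.sum_congr rfl fun k _ => h j k]
  simp only [Finset.sum_add_distrib]
  rw [Finset.sum_comm (f := fun j k => if k < j then T k j else 0)]
  ring

/-- Lagrange's identity `∑_{j<k} (x_k c_j - x_j c_k)² = |x|² |c|² - (x·c)²`. -/
lemma lagrange_identity {n : ℕ} (x c : Fin n → ℝ) :
    ∑ j, ∑ k, (if j < k then (x k * c j - x j * c k) ^ 2 else 0)
      = (∑ k, x k ^ 2) * (∑ k, c k ^ 2) - (∑ k, x k * c k) ^ 2 := by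
  have h := sum_lt_eq_half (fun j k => (x k * c j - x j * c k) ^ 2)
    (fun j => by ring) (fun j k => by ring)
  have h2 : ∑ j, ∑ k, (x k * c j - x j * c k) ^ 2
      = 2 * ((∑ k, x k ^ 2) * (∑ k, c k ^ 2) - (∑ k, x k * c k) ^ 2) := by
    have e : ∀ j k, (x k * c j - x j * c k) ^ 2
        = x k ^ 2 * c j ^ 2 + x j ^ 2 * c k ^ 2 - 2 * ((x j * c j) * (x k * c k)) := by
      intro j k; ring
    simp only [e, Finset.sum_add_distrib, Finset.sum_sub_distrib, ← Finset.mul_sum,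
      ← Finset.sum_mul]
    ring
  linarith

lemma boost_identity {n : ℕ} (t b : ℝ) (x c : Fin n → ℝ) :
    ∑ k, (t * c k + x k * b) ^ 2
      = t ^ 2 * (∑ k, c k ^ 2) + 2 * t * b * (∑ k, x k * c k) + b ^ 2 * ∑ k, x k ^ 2 := by
  simp only [Finset.mul_sum, ← Finset.sum_add_distrib]
  exact Finset.sum_congr rfl fun k _ => by ring

/-! ### A differential inequality -/

/-- If `t m' ≤ -m/2 + 2E` for `t > 0`, then `√t (m - 4E)` is nonincreasing and vanishes at `0`. -/
lemma gronwall_pos {m m' : ℝ → ℝ} {E : ℝ} (hm : ∀ t, HasDerivAt m (m' t) t)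
    (h : ∀ t, 0 < t → t * m' t ≤ -(1 / 2) * m t + 2 * E) {t : ℝ} (ht : 0 < t) :
    m t ≤ 4 * E := by
  have hcont : Continuous m := continuous_iff_continuousAt.2 fun t => (hm t).continuousAt
  have hd : ∀ s, 0 < s → HasDerivAt (fun s => √s * (m s - 4 * E))
      (1 / (2 * √s) * (m s - 4 * E) + √s * m' s) s := fun s hs =>
    (Real.hasDerivAt_sqrt hs.ne').mul ((hm s).sub_const _)
  have hanti : AntitoneOn (fun s => √s * (m s - 4 * E)) (Set.Ici 0) := by
    refine antitoneOn_of_deriv_nonpos (convex_Ici 0) (by fun_prop) ?_ ?_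
    · intro s hs
      rw [interior_Ici] at hs
      exact (hd s hs).differentiableAt.differentiableWithinAt
    · intro s hs
      rw [interior_Ici] at hs
      rw [(hd s hs).deriv]
      have hs0 : 0 < √s := Real.sqrt_pos.2 hs
      have hss : √s * √s = s := Real.mul_self_sqrt (le_of_lt hs)
      have : 1 / (2 * √s) * (m s - 4 * E) + √s * m' s
          = (1 / 2 * (m s - 4 * E) + s * m' s) / √s := by
        have e : 1 / (2 * √s) * √s = 1 / 2 := by field_simp
        rw [eq_div_iff hs0.ne']
        linear_combination (m s - 4 * E) * e + m' s * hss
      rw [this]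
      exact div_nonpos_of_nonpos_of_nonneg (by linarith [h s hs]) hs0.le
  have := hanti (Set.mem_Ici.2 le_rfl) (Set.mem_Ici.2 ht.le) ht.le
  simp only [Real.sqrt_zero, zero_mul] at this
  have h2 := nonpos_of_mul_nonpos_right this (Real.sqrt_pos.2 ht)
  linarith

lemma gronwall_all {m m' : ℝ → ℝ} {E : ℝ} (hm : ∀ t, HasDerivAt m (m' t) t)
    (h : ∀ t, t * m' t ≤ -(1 / 2) * m t + 2 * E) (t : ℝ) : m t ≤ 4 * E := by
  rcases lt_trichotomy t 0 with ht | ht | ht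
  · have := gronwall_pos (m := fun s => m (-s)) (m' := fun s => -m' (-s)) (E := E)
      (fun s => by simpa [Function.comp_def] using (hm (-s)).comp s (hasDerivAt_neg s))
      (fun s _ => by linarith [h (-s)]) (neg_pos.2 ht)
    simpa using this
  · have := h 0
    subst ht
    linarith
  · exact gronwall_pos hm (fun s _ => h s) ht

/-! ### Energy estimates -/

lemma IsWaveSol.coneSupp {n : ℕ} {R : ℝ} {f g : Euc n → ℝ} {w : ℝ → Euc n → ℝ}
    (hw : IsWaveSol n R f g w) : ConeSupp R (fun p : ℝ × Euc n => w p.1 p.2) := by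
  refine ⟨hw.smooth_w, fun t x hx => image_eq_zero_of_notMem_tsupport fun hmem => ?_⟩
  have := hw.fin_prop t hmem
  simp only [Metric.mem_closedBall, dist_zero_right] at this
  linarith

/-- The conformal energy of `a` at time `t`. -/
def confEnergy {n : ℕ} (a : ℝ × Euc n → ℝ) (t : ℝ) : ℝ :=
  ∫ x, confDensity a (Dv (eT n) a) (fun j => Dv (eX j) a) (t, x)

/-- The sum of the squares of all invariant fields applied to `a`, in closed form:
`(t² + |x|²)((∂_t a)² + |∇a|²) + 4t (x·∇a) ∂_t a`. -/
def fieldDensity {n : ℕ} (a : ℝ × Euc n → ℝ) (p : ℝ × Euc n) : ℝ :=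
  (p.1 ^ 2 + ∑ k, p.2 k ^ 2) * (Dv (eT n) a p ^ 2 + ∑ k, Dv (eX k) a p ^ 2)
    + 4 * p.1 * (∑ k, p.2 k * Dv (eX k) a p) * Dv (eT n) a p

lemma fieldDensity_eq {n : ℕ} (a : ℝ × Euc n → ℝ) (t : ℝ) (x : Euc n) :
    (t * Dv (eT n) a (t, x) + ∑ j, x j * Dv (eX j) a (t, x)) ^ 2
      + (∑ k, (t * Dv (eX k) a (t, x) + x k * Dv (eT n) a (t, x)) ^ 2)
      + (∑ j, ∑ k, (if j < k then
          (x k * Dv (eX j) a (t, x) - x j * Dv (eX k) a (t, x)) ^ 2 else 0))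
      = fieldDensity a (t, x) := by
  rw [boost_identity, lagrange_identity (fun k => x k) (fun k => Dv (eX k) a (t, x))]
  simp only [fieldDensity]
  ring

/-- The boosts and rotations contribute a nonnegative amount to `fieldDensity`. -/
lemma sq_scaling_le {n : ℕ} (a : ℝ × Euc n → ℝ) (t : ℝ) (x : Euc n) :
    (t * Dv (eT n) a (t, x) + ∑ j, x j * Dv (eX j) a (t, x)) ^ 2 ≤ fieldDensity a (t, x) := by
  rw [← fieldDensity_eq, add_assoc]
  refine le_add_of_nonneg_right (add_nonneg (Finset.sum_nonneg fun k _ => sq_nonneg _)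
    (Finset.sum_nonneg fun j _ => Finset.sum_nonneg fun k _ => ?_))
  split_ifs
  · exact sq_nonneg _
  · exact le_rfl

section

variable {n : ℕ} {R : ℝ} {a : ℝ × Euc n → ℝ}

lemma confDensity_coneSupp (ha : ConeSupp R a) :
    ConeSupp R (confDensity a (Dv (eT n) a) (fun j => Dv (eX j) a)) := by
  have h0 := ha.smooth
  have h1 := (ha.Dv (eT n)).smooth
  have h2 := fun j : Fin n => (ha.Dv (eX j)).smooth
  refine ⟨by unfold confDensity; fun_prop, fun t x h => ?_⟩
  have e1 := (ha.Dv (eT n)).zero t x h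
  have e2 := fun j : Fin n => (ha.Dv (eX j)).zero t x h
  simp [confDensity, ha.zero t x h, e1, e2]

lemma confFlux_coneSupp (ha : ConeSupp R a) (j : Fin n) :
    ConeSupp R (confFlux a (Dv (eT n) a) (fun j => Dv (eX j) a) j) := by
  have h0 := ha.smooth
  have h1 := (ha.Dv (eT n)).smooth
  have h2 := fun j : Fin n => (ha.Dv (eX j)).smooth
  refine ⟨by unfold confFlux; fun_prop, fun t x h => ?_⟩
  have e1 := (ha.Dv (eT n)).zero t x h
  have e2 := fun j : Fin n => (ha.Dv (eX j)).zero t x h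
  simp [confFlux, ha.zero t x h, e1, e2]

lemma fieldDensity_coneSupp (ha : ConeSupp R a) : ConeSupp R (fieldDensity a) := by
  have h1 := (ha.Dv (eT n)).smooth
  have h2 := fun j : Fin n => (ha.Dv (eX j)).smooth
  refine ⟨by unfold fieldDensity; fun_prop, fun t x h => ?_⟩
  have e1 := (ha.Dv (eT n)).zero t x h
  have e2 := fun j : Fin n => (ha.Dv (eX j)).zero t x h
  simp [fieldDensity, e1, e2]

lemma radial_coneSupp (ha : ConeSupp R a) :
    ConeSupp R (fun p => 2 * a p * (∑ k, p.2 k * Dv (eX k) a p) + n * a p ^ 2) := by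
  have h0 := ha.smooth
  have h2 := fun j : Fin n => (ha.Dv (eX j)).smooth
  exact ⟨by fun_prop, fun t x h => by simp [ha.zero t x h]⟩

lemma confEnergy_const (ha : ConeSupp R a)
    (hwave : ∀ p, Dv (eT n) (Dv (eT n) a) p = ∑ j, Dv (eX j) (Dv (eX j) a) p) (t : ℝ) :
    confEnergy a t = confEnergy a 0 := by
  have hder : ∀ s, HasDerivAt (confEnergy a) 0 s := by
    intro s
    have h := (confDensity_coneSupp ha).hasDerivAt_integral s
    have e : ∫ x, Dv (eT n) (confDensity a (Dv (eT n) a) (fun j => Dv (eX j) a)) (s, x) = 0 := by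
      rw [← ConeSupp.integral_div (fun j => confFlux_coneSupp ha j) s]
      congr 1
      funext x
      exact conf_local_conservation (d := fun j => Dv (eX j) (Dv (eT n) a))
        (h := fun j k => Dv (eX j) (Dv (eX k) a)) ha.differentiable
        (ha.Dv _).differentiable (fun j => (ha.Dv _).differentiable) (s, x) rfl (fun _ => rfl)
        (hwave _) (fun _ => rfl) (fun _ => Dv_comm ha.smooth _) (fun _ _ => rfl)
        (fun _ _ => Dv_comm ha.smooth _)
    rw [e] at h
    exact h
  exact is_const_of_deriv_eq_zero (fun s => (hder s).differentiableAt)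
    (fun s => (hder s).deriv) t 0

/-- At `t = 0` the density is at most `|x|² (b² + |c|²)`, and `|x| ≤ R` on the support. -/
lemma confEnergy_zero_le (ha : ConeSupp R a) (hn : (1 : ℝ) ≤ n) :
    confEnergy a 0
      ≤ R ^ 2 * ∫ x, (Dv (eT n) a (0, x) ^ 2 + ∑ k, Dv (eX k) a (0, x) ^ 2) := by
  have hI : ConeSupp R fun p => Dv (eT n) a p ^ 2 + ∑ k, Dv (eX k) a p ^ 2 :=
    (ha.Dv _).sq.add (ConeSupp.sum fun k => (ha.Dv _).sq)
  rw [← integral_const_mul]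
  refine integral_mono ((confDensity_coneSupp ha).integrable 0)
    ((hI.integrable 0).const_mul _) fun x => ?_
  have hnn : 0 ≤ Dv (eT n) a (0, x) ^ 2 + ∑ k, Dv (eX k) a (0, x) ^ 2 := by positivity
  by_cases hx : R + |(0 : ℝ)| < ‖x‖
  · change confDensity _ _ _ (0, x) ≤ _
    rw [(confDensity_coneSupp ha).zero 0 x hx]
    positivity
  · have hx2 : ∑ k, x k ^ 2 ≤ R ^ 2 := by
      rw [← EuclideanSpace.real_norm_sq_eq]
      simp only [abs_zero, add_zero, not_lt] at hx
      gcongr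
    have h1 := mul_le_mul_of_nonneg_right hx2 hnn
    have h2 : 0 ≤ ((n : ℝ) - 1) * a (0, x) ^ 2 := mul_nonneg (by linarith) (sq_nonneg _)
    simp only [confDensity]
    linarith

lemma integral_lin3 {F G H : Euc n → ℝ} (hF : Integrable F) (hG : Integrable G)
    (hH : Integrable H) (α β γ : ℝ) :
    ∫ x, (α * F x + (β * G x + γ * H x)) = α * (∫ x, F x) + (β * (∫ x, G x) + γ * ∫ x, H x) := by
  have h : Integrable fun x => β * G x + γ * H x := (hG.const_mul β).add (hH.const_mul γ)
  rw [integral_add (hF.const_mul α) h, integral_add (hG.const_mul β) (hH.const_mul γ)]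
  simp only [integral_const_mul]

/-- The `L²` norm of a solution is controlled by its conformal energy, through the
differential inequality `t m' ≤ -m/2 + 2E` for `m = ‖w(t)‖²`; the sign of the coefficient of `m`
comes from `n ≥ 3`. -/
lemma integral_sq_le (ha : ConeSupp R a)
    (hwave : ∀ p, Dv (eT n) (Dv (eT n) a) p = ∑ j, Dv (eX j) (Dv (eX j) a) p)
    (hn : (3 : ℝ) ≤ n) (t : ℝ) : ∫ x, a (t, x) ^ 2 ≤ 4 * confEnergy a t := by
  rw [confEnergy_const ha hwave]
  refine gronwall_all (m := fun t => ∫ x, a (t, x) ^ 2)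
    (fun s => ha.sq.hasDerivAt_integral s) (fun s => ?_) t
  rw [← confEnergy_const ha hwave s]
  have hq := (confDensity_coneSupp ha).integrable s
  have hr : Integrable fun x : Euc n =>
      2 * a (s, x) * (∑ k, x k * Dv (eX k) a (s, x)) + n * a (s, x) ^ 2 :=
    (radial_coneSupp ha).integrable s
  have hm := ha.sq.integrable s
  have hm' := (ha.sq.Dv (eT n)).integrable s
  have hr0 := integral_radial ha s
  have key : ∫ x, (s * Dv (eT n) (fun p => a p ^ 2) (s, x)
      + (2 * a (s, x) * (∑ k, x k * Dv (eX k) a (s, x)) + n * a (s, x) ^ 2))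
      ≤ ∫ x, (-(1 / 2) * a (s, x) ^ 2
        + (2 * confDensity a (Dv (eT n) a) (fun j => Dv (eX j) a) (s, x)
        + 2 * ((n : ℝ) - 1) * (2 * a (s, x) * (∑ k, x k * Dv (eX k) a (s, x))
          + n * a (s, x) ^ 2))) := by
    refine integral_mono ((hm'.const_mul _).add hr)
      ((hm.const_mul _).add ((hq.const_mul _).add (hr.const_mul _))) fun x => ?_
    have h1 := sq_scaling_le a s x
    simp only [Dv_sq (ha.differentiable _)]
    simp only [fieldDensity, confDensity] at h1 ⊢
    -- Young's inequality `2aS ≤ a²/2 + 2S²` for `S = Z₀a + (n-1)a`.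
    have h2 := sq_nonneg (a (s, x) - 2 * (s * Dv (eT n) a (s, x)
      + ∑ j, x j * Dv (eX j) a (s, x) + ((n : ℝ) - 1) * a (s, x)))
    have h3 : 0 ≤ ((n : ℝ) - 3) * a (s, x) ^ 2 := mul_nonneg (by linarith) (sq_nonneg _)
    linarith
  rw [integral_add (hm'.const_mul _) hr, integral_const_mul, hr0, integral_lin3 hm hq hr,
    hr0] at key
  simp only [confEnergy]
  linarith

lemma integral_fields_le (ha : ConeSupp R a)
    (hwave : ∀ p, Dv (eT n) (Dv (eT n) a) p = ∑ j, Dv (eX j) (Dv (eX j) a) p)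
    (hn : (3 : ℝ) ≤ n) (t : ℝ) :
    ∫ x, fieldDensity a (t, x) ≤ (2 + 8 * ((n : ℝ) - 1) ^ 2) * confEnergy a t := by
  have hq := (confDensity_coneSupp ha).integrable t
  have hr : Integrable fun x : Euc n =>
      2 * a (t, x) * (∑ k, x k * Dv (eX k) a (t, x)) + n * a (t, x) ^ 2 :=
    (radial_coneSupp ha).integrable t
  have hm := ha.sq.integrable t
  have hr0 := integral_radial ha t
  have hm4 := integral_sq_le ha hwave hn t
  have key : ∫ x, fieldDensity a (t, x)
      ≤ ∫ x, (2 * ((n : ℝ) - 1) ^ 2 * a (t, x) ^ 2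
        + (2 * confDensity a (Dv (eT n) a) (fun j => Dv (eX j) a) (t, x)
        + 2 * ((n : ℝ) - 1) * (2 * a (t, x) * (∑ k, x k * Dv (eX k) a (t, x))
          + n * a (t, x) ^ 2))) := by
    refine integral_mono ((fieldDensity_coneSupp ha).integrable t)
      ((hm.const_mul _).add ((hq.const_mul _).add (hr.const_mul _))) fun x => ?_
    have h1 := sq_scaling_le a t x
    simp only [fieldDensity, confDensity] at h1 ⊢
    -- `(Z₀a)² ≤ 2 (Z₀a + (n-1)a)² + 2 (n-1)² a²`.
    have h2 := sq_nonneg (t * Dv (eT n) a (t, x)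
      + ∑ j, x j * Dv (eX j) a (t, x) + 2 * (((n : ℝ) - 1) * a (t, x)))
    linarith
  rw [integral_lin3 hm hq hr, hr0] at key
  have h5 := mul_le_mul_of_nonneg_left hm4 (by positivity : 0 ≤ 2 * ((n : ℝ) - 1) ^ 2)
  simp only [confEnergy] at h5 ⊢
  linarith

end

lemma norm_gradient_sq {n : ℕ} (f : Euc n → ℝ) (x : Euc n) :
    ‖gradient f x‖ ^ 2 = ∑ j, pj f x j ^ 2 := by
  rw [EuclideanSpace.real_norm_sq_eq]
  refine Finset.sum_congr rfl fun j _ => ?_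
  rw [pj, ← inner_gradient_left, EuclideanSpace.inner_single_right]
  simp

/-- Uniform bound for the invariant vector fields applied to `w` (estimate (3.5)). -/
theorem invariant_fields_energy_bound {n : ℕ} (hn : 3 ≤ n) {R : ℝ} (hR : 0 < R) :
    ∃ C : ℝ, 0 < C ∧ ∀ (f g : Euc n → ℝ) (w : ℝ → Euc n → ℝ),
      IsWaveSol n R f g w → ∀ t : ℝ,
        (∫ x, (Z0 w t x) ^ 2) + (∑ k, ∫ x, (Z0k w t k x) ^ 2)
            + (∑ j, ∑ k, (if j < k then ∫ x, (Zjk w t j k x) ^ 2 else 0))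
          ≤ C * ∫ x, (‖gradient f x‖ ^ 2 + (g x) ^ 2) := by
  refine ⟨(2 + 8 * ((n : ℝ) - 1) ^ 2) * R ^ 2, by positivity, fun f g w hw t => ?_⟩
  have hn' : (3 : ℝ) ≤ n := by exact_mod_cast hn
  set a : ℝ × Euc n → ℝ := fun p => w p.1 p.2 with ha_def
  have ha : ConeSupp R a := hw.coneSupp
  have had := ha.differentiable
  have hpt : pt w = fun t x => Dv (eT n) a (t, x) := pt_eq had
  have hpj : ∀ t x j, pj (w t) x j = Dv (eX j) a (t, x) := fun t x j => pj_eq had t x j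
  have hwave : ∀ p, Dv (eT n) (Dv (eT n) a) p = ∑ j, Dv (eX j) (Dv (eX j) a) p := by
    rintro ⟨s, x⟩
    have h := hw.wave_eq s x
    rw [hpt, pt_eq (ha.Dv (eT n)).differentiable] at h
    simp only [lap, hpj, fun j => pj_eq (ha.Dv (eX j)).differentiable s x j] at h
    exact h
  have hE : confEnergy a t ≤ R ^ 2 * ∫ x, (‖gradient f x‖ ^ 2 + (g x) ^ 2) := by
    rw [confEnergy_const ha hwave t]
    refine (confEnergy_zero_le ha (by linarith)).trans_eq ?_
    congr 2
    funext x
    have h0 : w 0 = f := funext hw.init_pos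
    rw [norm_gradient_sq, ← h0, ← hw.init_vel x, hpt]
    simp only [hpj]
    ring
  have hP := integral_fields_le ha hwave hn' t
  have hint1 : Integrable fun x => Z0 w t x ^ 2 := by
    have : ConeSupp R fun p : ℝ × Euc n =>
        p.1 * Dv (eT n) a p + ∑ j, p.2 j * Dv (eX j) a p :=
      ((ha.Dv _).mul_left (by fun_prop)).add
        (ConeSupp.sum fun j => (ha.Dv _).mul_left (by fun_prop))
    simpa only [Z0, hpt, hpj] using this.sq.integrable t
  have hint2 : ∀ k, Integrable fun x => Z0k w t k x ^ 2 := by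
    intro k
    have : ConeSupp R fun p : ℝ × Euc n =>
        p.1 * Dv (eX k) a p + p.2 k * Dv (eT n) a p :=
      ((ha.Dv _).mul_left (by fun_prop)).add ((ha.Dv _).mul_left (by fun_prop))
    simpa only [Z0k, hpt, hpj] using this.sq.integrable t
  have hint3 : ∀ j k, Integrable fun x => if j < k then Zjk w t j k x ^ 2 else 0 := by
    intro j k
    have : ConeSupp R fun p : ℝ × Euc n =>
        p.2 k * Dv (eX j) a p - p.2 j * Dv (eX k) a p :=
      ((ha.Dv _).mul_left (by fun_prop)).sub ((ha.Dv _).mul_left (by fun_prop))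
    split_ifs
    · simpa only [Zjk, hpj] using this.sq.integrable t
    · exact integrable_zero _ _ _
  have hsum : (∫ x, (Z0 w t x) ^ 2) + (∑ k, ∫ x, (Z0k w t k x) ^ 2)
      + (∑ j, ∑ k, (if j < k then ∫ x, (Zjk w t j k x) ^ 2 else 0))
      = ∫ x, fieldDensity a (t, x) := by
    have e3 : (∑ j, ∑ k, (if j < k then ∫ x, (Zjk w t j k x) ^ 2 else 0))
        = ∫ x, ∑ j, ∑ k, (if j < k then Zjk w t j k x ^ 2 else 0) := by
      rw [integral_finsetSum _ fun j _ => integrable_finsetSum _ fun k _ => hint3 j k]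
      refine Finset.sum_congr rfl fun j _ => ?_
      rw [integral_finsetSum _ fun k _ => hint3 j k]
      refine Finset.sum_congr rfl fun k _ => ?_
      split_ifs <;> simp
    have h12 : Integrable fun x => Z0 w t x ^ 2 + ∑ k, Z0k w t k x ^ 2 :=
      hint1.add (integrable_finsetSum _ fun k _ => hint2 k)
    rw [e3, ← integral_finsetSum _ fun k _ => hint2 k,
      ← integral_add hint1 (integrable_finsetSum _ fun k _ => hint2 k),
      ← integral_add h12 (integrable_finsetSum _ fun j _ => integrable_finsetSum _ fun k _ => hint3 j k)]
    congr 1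
    funext x
    simp only [Z0, Z0k, Zjk, hpt, hpj]
    exact fieldDensity_eq a t x
  rw [hsum]
  calc ∫ x, fieldDensity a (t, x)
      ≤ (2 + 8 * ((n : ℝ) - 1) ^ 2) * confEnergy a t := hP
    _ ≤ (2 + 8 * ((n : ℝ) - 1) ^ 2) * (R ^ 2 * ∫ x, (‖gradient f x‖ ^ 2 + (g x) ^ 2)) := by
        gcongr
    _ = _ := by ring
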